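/- arXiv:1607.01536 — 5 statements merged into one kernel-verified Lean document; each statement's English description precedes it below -/
import Mathlib

section
/- Let G be a group and a, b ∈ G. Set m₁ = a⁻²b, l₁ = a⁻²bab⁻²ab, m₂ = b⁻¹a, l₂ = b⁻¹ab⁻¹aba⁻³ba. If m₁³ = l₁ and m₂³ = l₂, then a³ = 1 and b³ = 1. -/
/-!
Cancelling common prefixes and suffixes, `m₂ ^ 3 = l₂` becomes `b⁻¹ = b * a⁻³ * b`, that is
`a ^ 3 = b ^ 3`, while `m₁ ^ 3 = l₁` becomes `a⁻² * b * a⁻² = a * b⁻² * a`, that is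
`b = a ^ 3 * b⁻² * a ^ 3`. Substituting the first relation into the second gives `b = b ^ 4`,
so `b ^ 3 = 1` and then `a ^ 3 = 1`.
-/

theorem surgery_relations_give_order_three {G : Type*} [Group G] (a b : G)
    (m₁ l₁ m₂ l₂ : G)
    (hm₁ : m₁ = a⁻¹ ^ 2 * b) (hl₁ : l₁ = a⁻¹ ^ 2 * b * a * b⁻¹ ^ 2 * a * b)
    (hm₂ : m₂ = b⁻¹ * a) (hl₂ : l₂ = b⁻¹ * a * b⁻¹ * a * b * a⁻¹ ^ 3 * b * a)
    (h₁ : m₁ ^ 3 = l₁) (h₂ : m₂ ^ 3 = l₂) :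
    a ^ 3 = 1 ∧ b ^ 3 = 1 := by
  subst hm₁ hl₁ hm₂ hl₂
  have e₂ : b⁻¹ = b * a⁻¹ ^ 3 * b := by
    apply mul_left_cancel (a := b⁻¹ * a * b⁻¹ * a)
    apply mul_right_cancel (b := a)
    simpa only [pow_succ, pow_zero, one_mul, mul_assoc] using h₂
  have e₁ : a⁻¹ ^ 2 * b * a⁻¹ ^ 2 = a * b⁻¹ ^ 2 * a := by
    apply mul_left_cancel (a := a⁻¹ ^ 2 * b)
    apply mul_right_cancel (b := b)
    simpa only [pow_succ, pow_zero, one_mul, mul_assoc] using h₁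
  have hab : a ^ 3 = b ^ 3 := by
    have h : (a ^ 3)⁻¹ = (b ^ 3)⁻¹ := by
      calc (a ^ 3)⁻¹ = b⁻¹ * (b * a⁻¹ ^ 3 * b) * b⁻¹ := by group
        _ = b⁻¹ * b⁻¹ * b⁻¹ := by rw [← e₂]
        _ = (b ^ 3)⁻¹ := by group
    exact inv_injective h
  have hb : b ^ 3 = 1 := by
    have h : b = b * b ^ 3 := by
      calc b = a ^ 2 * (a⁻¹ ^ 2 * b * a⁻¹ ^ 2) * a ^ 2 := by group
        _ = a ^ 2 * (a * b⁻¹ ^ 2 * a) * a ^ 2 := by rw [e₁]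
        _ = a ^ 3 * b⁻¹ ^ 2 * a ^ 3 := by group
        _ = b ^ 3 * b⁻¹ ^ 2 * b ^ 3 := by rw [hab]
        _ = b * b ^ 3 := by group
    exact left_eq_mul.mp h
  exact ⟨hab.trans hb, hb⟩
end

section
/- For every tuple (t₁, t₂, t₃, t₄, t₅, t₆, t₇, t₈) of complex numbers there exist 3×3 complex matrices A, B with det A = det B = 1 such that tr A = t₁, tr B = t₂, tr(AB) = t₃, tr(A⁻¹B) = t₄, tr A⁻¹ = t₅, tr B⁻¹ = t₆, tr(A⁻¹B⁻¹) = t₇ and tr(AB⁻¹) = t₈. (Surjectivity of Lawton's trace map onto ℂ⁸.) -/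
/-!
Let `a₁, a₂, a₃` and `b₁, b₂, b₃` be the prescribed eigenvalues of `A` and `B`, i.e. the roots of
`x³ - t₁x² + t₅x - 1` and `x³ - t₂x² + t₆x - 1`. Since both determinants are `1`, inverses are
adjugates, and it remains to choose `A` and `B` with these eigenvalues so that the four traces
`tr (A^{±1} B^{±1})` take prescribed values.

*Opposite flags.* Take `A` upper triangular and `B` lower triangular. The four traces depend only on
the torus invariants `p = x₁₂y₂₁`, `q = x₂₃y₃₂`, `r = x₁₃y₃₁`, `s = x₁₂x₂₃y₃₁`, `t = x₁₃y₂₁y₃₂`,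
which are subject to the single relation `st = pqr`, and every solution of that relation occurs
(`exists_entries`). Three of the trace equations give `r, s, t` as affine functions of `p, q`, and
the fourth becomes `pq = ℓ(p, q)` with `ℓ` affine. Replacing `pq` by `ℓ` twice turns `st = pqr` into
a *linear* equation `M(a₃,b₃) p + M(a₁,b₁) q + k = 0`, where `M` is `traceObstruction`. So
if both coefficients are nonzero, everything reduces to a quadratic equation in `p`
(`exists_invariants`).

*Non-opposite flags.* If instead `M(a, b) = 0` for some eigenvalue `a` of `A` and `b` of `B`, then
the required pair can be written down directly with `A` and `B` triangular with respect to two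
flags of the same basis that are not opposite: for such pairs three of the four traces are
arbitrary, and the vanishing of `M` is exactly the fourth equation (`exists_pair_of_not_opposite`).
-/

/-- `RealizesTraces a₁ a₂ a₃ b₁ b₂ b₃ τ₁ τ₂ τ₃ τ₄`: some pair of matrices `A`, `B` of determinant `1`
has the first two elementary symmetric functions of the eigenvalues equal to those of the `aᵢ` and
of the `bᵢ`, and `tr (A B)`, `tr (A⁻¹ B)`, `tr (A B⁻¹)`, `tr (A⁻¹ B⁻¹)` equal to `τ₁, τ₂, τ₃, τ₄`.
Inverses are written as adjugates. -/
def RealizesTraces (a₁ a₂ a₃ b₁ b₂ b₃ τ₁ τ₂ τ₃ τ₄ : ℂ) : Prop :=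
  ∃ A B : Matrix (Fin 3) (Fin 3) ℂ, A.det = 1 ∧ B.det = 1 ∧
    A.trace = a₁ + a₂ + a₃ ∧ B.trace = b₁ + b₂ + b₃ ∧
    A.adjugate.trace = a₁ * a₂ + a₁ * a₃ + a₂ * a₃ ∧
    B.adjugate.trace = b₁ * b₂ + b₁ * b₃ + b₂ * b₃ ∧
    (A * B).trace = τ₁ ∧ (A.adjugate * B).trace = τ₂ ∧
    (A * B.adjugate).trace = τ₃ ∧ (A.adjugate * B.adjugate).trace = τ₄

/-- The quantity `M(a₁, b₁)` attached to the eigenvalue `a₁` of `A` and `b₁` of `B`; it is symmetric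
in `a₂, a₃` and in `b₂, b₃`. With `u = a₁² + a₂a₃`, `v = a₁(a₂ + a₃)` and `u', v'` the analogues for
`B`, it equals `τ₄ + b₁τ₂ + a₁τ₃ + a₁b₁τ₁ - (vv' + uv' + vu')`. -/
def traceObstruction (a₁ a₂ a₃ b₁ b₂ b₃ τ₁ τ₂ τ₃ τ₄ : ℂ) : ℂ :=
  τ₄ + b₁ * τ₂ + a₁ * τ₃ + a₁ * b₁ * τ₁
    - (a₁ * (a₂ + a₃) * (b₁ * (b₂ + b₃)) + (a₁ ^ 2 + a₂ * a₃) * (b₁ * (b₂ + b₃))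
      + a₁ * (a₂ + a₃) * (b₁ ^ 2 + b₂ * b₃))

theorem exists_quadratic_root {a : ℂ} (ha : a ≠ 0) (b c : ℂ) :
    ∃ x : ℂ, a * x ^ 2 + b * x + c = 0 := by
  obtain ⟨w, hw⟩ := IsAlgClosed.exists_pow_nat_eq (b ^ 2 - 4 * a * c) (n := 2) (by norm_num)
  refine ⟨(w - b) / (2 * a), ?_⟩
  field_simp
  linear_combination hw

theorem exists_eigenvalues (e₁ e₂ : ℂ) :
    ∃ a₁ a₂ a₃ : ℂ, a₁ + a₂ + a₃ = e₁ ∧ a₁ * a₂ + a₁ * a₃ + a₂ * a₃ = e₂ ∧ a₁ * a₂ * a₃ = 1 := by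
  obtain ⟨a, ha⟩ := IsAlgClosed.exists_root
    (Polynomial.X ^ 3 + (- Polynomial.C e₁ * Polynomial.X ^ 2 + Polynomial.C e₂ * Polynomial.X - 1))
    (by
      have : Polynomial.degree (Polynomial.X ^ 3 + (- Polynomial.C e₁ * Polynomial.X ^ 2
          + Polynomial.C e₂ * Polynomial.X - 1) : Polynomial ℂ) = 3 := by
        compute_degree!
      rw [this]; norm_num)
  simp only [Polynomial.IsRoot, Polynomial.eval_add, Polynomial.eval_sub, Polynomial.eval_mul,
    Polynomial.eval_pow, Polynomial.eval_X, Polynomial.eval_C, Polynomial.eval_neg,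
    Polynomial.eval_one] at ha
  -- The cubic divided by `x - a` is `x² - (e₁ - a) x + (a² - e₁ a + e₂)`.
  obtain ⟨b, hb⟩ := exists_quadratic_root (one_ne_zero) (-(e₁ - a)) (a ^ 2 - e₁ * a + e₂)
  exact ⟨a, b, e₁ - a - b, by ring, by linear_combination -hb, by linear_combination ha - a * hb⟩

/-- A pair of triangular matrices for two non-opposite flags: the order of the basis is `1, 2, 3` for
`A` and `3, 1, 2` for `B`. -/
theorem exists_pair_of_not_opposite {a₁ a₂ a₃ b₁ b₂ b₃ τ₁ τ₂ τ₃ τ₄ : ℂ}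
    (ha : a₁ * a₂ * a₃ = 1) (hb : b₁ * b₂ * b₃ = 1)
    (h : traceObstruction a₁ a₂ a₃ b₁ b₂ b₃ τ₁ τ₂ τ₃ τ₄ = 0) :
    RealizesTraces a₁ a₂ a₃ b₁ b₂ b₃ τ₁ τ₂ τ₃ τ₄ := by
  unfold traceObstruction at h
  -- The eigenvalue `a₁` sits at index 1 and `b₁` at index 2, so the diagonal of `B` is `b₂, b₁, b₃`.
  -- The entries `c`, `s`, `t` are read off from `tr (A B)`, `tr (A⁻¹ B)` and `tr (A B⁻¹)`.
  obtain ⟨c, hc⟩ : ∃ c, c = τ₁ - (a₁ * b₂ + a₂ * b₁ + a₃ * b₃) := ⟨_, rfl⟩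
  obtain ⟨s, hs⟩ : ∃ s, s = τ₂ - (a₂ * a₃ * b₂ + a₁ * a₃ * b₁ + a₁ * a₂ * b₃) + a₁ * c := ⟨_, rfl⟩
  obtain ⟨t, ht⟩ : ∃ t, t = τ₃ - (b₁ * b₃ * a₁ + b₂ * b₃ * a₂ + b₁ * b₂ * a₃) + b₂ * c := ⟨_, rfl⟩
  refine ⟨!![a₁, s, 0; 0, a₂, 1; 0, 0, a₃], !![b₂, t, 0; 0, b₁, 0; 1, c, b₃],
    ?_, ?_, ?_, ?_, ?_, ?_, ?_, ?_, ?_, ?_⟩ <;>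
  simp [Matrix.det_fin_three, Matrix.adjugate_fin_three, Matrix.trace_fin_three]
  · exact ha
  · linear_combination hb
  · ring
  · ring
  · ring
  · linear_combination hc
  · linear_combination hs
  · linear_combination ht
  · linear_combination -h - b₁ * hs - a₁ * ht - a₁ * b₁ * hc

/-- The torus invariants of the off-diagonal entries of an upper and a lower triangular matrix take
all values allowed by the relation `st = pqr`. -/
theorem exists_entries {p q r s t : ℂ} (h : s * t = p * q * r) :
    ∃ x₁₂ x₁₃ x₂₃ y₂₁ y₃₁ y₃₂ : ℂ, x₁₂ * y₂₁ = p ∧ x₂₃ * y₃₂ = q ∧ x₁₃ * y₃₁ = r ∧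
      x₁₂ * x₂₃ * y₃₁ = s ∧ x₁₃ * y₂₁ * y₃₂ = t := by
  by_cases hs : s = 0
  · by_cases ht : t = 0
    · subst hs ht
      have h0 : p * q * r = 0 := by rw [← h, zero_mul]
      rcases mul_eq_zero.1 h0 with h0 | hr
      · rcases mul_eq_zero.1 h0 with hp | hq
        · exact ⟨0, 1, 1, 0, r, q, by simp [hp]⟩
        · exact ⟨1, 1, 0, p, r, 0, by simp [hq]⟩
      · exact ⟨1, 0, 1, p, 0, q, by simp [hr]⟩
    · refine ⟨p, t, q, 1, r / t, 1, by ring, by ring, by field_simp, ?_, by ring⟩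
      field_simp
      linear_combination -h
  · refine ⟨1, r / s, 1, p, s, q, by ring, by ring, by field_simp, by ring, ?_⟩
    field_simp
    linear_combination -h

/-- The trace equations for a pair with opposite flags, solved in terms of the torus invariants; the
`cᵢ` are the traces minus the contributions of the diagonals. -/
theorem exists_invariants {a₁ a₂ a₃ b₁ b₂ b₃ c₁ c₂ c₃ c₄ : ℂ}
    (h₁ : c₄ + b₁ * c₂ + a₁ * c₃ + a₁ * b₁ * c₁
      + (a₁ - a₂) * (a₁ - a₃) * (b₁ - b₂) * (b₁ - b₃) ≠ 0)
    (h₃ : c₄ + b₃ * c₂ + a₃ * c₃ + a₃ * b₃ * c₁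
      + (a₃ - a₁) * (a₃ - a₂) * (b₃ - b₁) * (b₃ - b₂) ≠ 0) :
    ∃ p q r s t : ℂ, s * t = p * q * r ∧ p + q + r = c₁ ∧
      s - a₃ * p - a₁ * q - a₂ * r = c₂ ∧ t - b₃ * p - b₁ * q - b₂ * r = c₃ ∧
      a₃ * b₃ * p + a₁ * b₁ * q + p * q - b₂ * s - a₂ * t + a₂ * b₂ * r = c₄ := by
  obtain ⟨m₁, hm₁⟩ : ∃ m, m = c₄ + b₁ * c₂ + a₁ * c₃ + a₁ * b₁ * c₁
      + (a₁ - a₂) * (a₁ - a₃) * (b₁ - b₂) * (b₁ - b₃) := ⟨_, rfl⟩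
  obtain ⟨m₃, hm₃⟩ : ∃ m, m = c₄ + b₃ * c₂ + a₃ * c₃ + a₃ * b₃ * c₁
      + (a₃ - a₁) * (a₃ - a₂) * (b₃ - b₁) * (b₃ - b₂) := ⟨_, rfl⟩
  rw [← hm₁] at h₁
  rw [← hm₃] at h₃
  -- `l` and `k` are the constant terms of `ℓ` and of the linear equation `m₃ p + m₁ q + k = 0`.
  obtain ⟨l, hl⟩ : ∃ l, l = c₄ + b₂ * c₂ + a₂ * c₃ + a₂ * b₂ * c₁ := ⟨_, rfl⟩
  obtain ⟨k, hk⟩ : ∃ k, k = (c₂ + a₂ * c₁) * (c₃ + b₂ * c₁) - l * c₁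
      - (a₃ - a₁) * (b₃ - b₁) * l := ⟨_, rfl⟩
  -- The quadratic obtained by eliminating `q` from the linear equation and `pq = ℓ(p, q)`.
  obtain ⟨p, hp⟩ := exists_quadratic_root h₃
    (k - m₁ * ((a₃ - a₂) * (b₃ - b₂)) + (a₁ - a₂) * (b₁ - b₂) * m₃)
    (m₁ * l + (a₁ - a₂) * (b₁ - b₂) * k)
  obtain ⟨q, hq⟩ : ∃ q, m₃ * p + m₁ * q + k = 0 :=
    ⟨-(m₃ * p + k) / m₁, by field_simp; ring⟩
  have hpq : p * q = l - (a₃ - a₂) * (b₃ - b₂) * p - (a₁ - a₂) * (b₁ - b₂) * q := by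
    apply mul_left_cancel₀ h₁
    linear_combination (p + (a₁ - a₂) * (b₁ - b₂)) * hq - hp
  refine ⟨p, q, c₁ - p - q, c₂ + a₃ * p + a₁ * q + a₂ * (c₁ - p - q),
    c₃ + b₃ * p + b₁ * q + b₂ * (c₁ - p - q), ?_, by ring, by ring, by ring, ?_⟩
  · subst hk hm₁ hm₃ hl
    linear_combination hq - ((c₁ - p - q) + (a₃ - a₁) * (b₃ - b₁)) * hpq
  · linear_combination hpq + hl

theorem exists_pair_of_opposite {a₁ a₂ a₃ b₁ b₂ b₃ τ₁ τ₂ τ₃ τ₄ : ℂ}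
    (ha : a₁ * a₂ * a₃ = 1) (hb : b₁ * b₂ * b₃ = 1)
    (h₁ : traceObstruction a₁ a₂ a₃ b₁ b₂ b₃ τ₁ τ₂ τ₃ τ₄ ≠ 0)
    (h₃ : traceObstruction a₃ a₁ a₂ b₃ b₁ b₂ τ₁ τ₂ τ₃ τ₄ ≠ 0) :
    RealizesTraces a₁ a₂ a₃ b₁ b₂ b₃ τ₁ τ₂ τ₃ τ₄ := by
  obtain ⟨p, q, r, s, t, hst, e₁, e₂, e₃, e₄⟩ := exists_invariants
    (a₁ := a₁) (a₂ := a₂) (a₃ := a₃) (b₁ := b₁) (b₂ := b₂) (b₃ := b₃)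
    (c₁ := τ₁ - (a₁ * b₁ + a₂ * b₂ + a₃ * b₃))
    (c₂ := τ₂ - (a₂ * a₃ * b₁ + a₁ * a₃ * b₂ + a₁ * a₂ * b₃))
    (c₃ := τ₃ - (b₂ * b₃ * a₁ + b₁ * b₃ * a₂ + b₁ * b₂ * a₃))
    (c₄ := τ₄ - (a₂ * a₃ * (b₂ * b₃) + a₁ * a₃ * (b₁ * b₃) + a₁ * a₂ * (b₁ * b₂)))
    (by convert h₁ using 1; unfold traceObstruction; ring)
    (by convert h₃ using 1; unfold traceObstruction; ring)
  obtain ⟨x₁₂, x₁₃, x₂₃, y₂₁, y₃₁, y₃₂, hp, hq, hr, hs, ht⟩ := exists_entries hst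
  subst hp hq hr hs ht
  refine ⟨!![a₁, x₁₂, x₁₃; 0, a₂, x₂₃; 0, 0, a₃], !![b₁, 0, 0; y₂₁, b₂, 0; y₃₁, y₃₂, b₃],
    ?_, ?_, ?_, ?_, ?_, ?_, ?_, ?_, ?_, ?_⟩ <;>
  simp [Matrix.det_fin_three, Matrix.adjugate_fin_three, Matrix.trace_fin_three]
  · exact ha
  · exact hb
  · ring
  · ring
  · linear_combination e₁
  · linear_combination e₂
  · linear_combination e₃
  · linear_combination e₄

theorem realizesTraces {a₁ a₂ a₃ b₁ b₂ b₃ : ℂ}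
    (ha : a₁ * a₂ * a₃ = 1) (hb : b₁ * b₂ * b₃ = 1) (τ₁ τ₂ τ₃ τ₄ : ℂ) :
    RealizesTraces a₁ a₂ a₃ b₁ b₂ b₃ τ₁ τ₂ τ₃ τ₄ := by
  by_cases h₁ : traceObstruction a₁ a₂ a₃ b₁ b₂ b₃ τ₁ τ₂ τ₃ τ₄ = 0
  · exact exists_pair_of_not_opposite ha hb h₁
  by_cases h₃ : traceObstruction a₃ a₁ a₂ b₃ b₁ b₂ τ₁ τ₂ τ₃ τ₄ = 0
  · obtain ⟨A, B, hA, hB, h₁, h₂, h₅, h₆, h⟩ := exists_pair_of_not_opposite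
      (by linear_combination ha) (by linear_combination hb) h₃
    exact ⟨A, B, hA, hB, by linear_combination h₁, by linear_combination h₂,
      by linear_combination h₅, by linear_combination h₆, h⟩
  exact exists_pair_of_opposite ha hb h₁ h₃

theorem inv_eq_adjugate_of_det_eq_one {A : Matrix (Fin 3) (Fin 3) ℂ} (h : A.det = 1) :
    A⁻¹ = A.adjugate := by
  simp [Matrix.inv_def, h]

theorem lawton_trace_map_surjective (t₁ t₂ t₃ t₄ t₅ t₆ t₇ t₈ : ℂ) :
    ∃ A B : Matrix (Fin 3) (Fin 3) ℂ, A.det = 1 ∧ B.det = 1 ∧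
      A.trace = t₁ ∧ B.trace = t₂ ∧ (A * B).trace = t₃ ∧ (A⁻¹ * B).trace = t₄ ∧
      A⁻¹.trace = t₅ ∧ B⁻¹.trace = t₆ ∧ (A⁻¹ * B⁻¹).trace = t₇ ∧ (A * B⁻¹).trace = t₈ := by
  obtain ⟨a₁, a₂, a₃, ha₁, ha₂, ha⟩ := exists_eigenvalues t₁ t₅
  obtain ⟨b₁, b₂, b₃, hb₁, hb₂, hb⟩ := exists_eigenvalues t₂ t₆
  obtain ⟨A, B, hA, hB, h₁, h₂, h₅, h₆, h₃, h₄, h₈, h₇⟩ := realizesTraces ha hb t₃ t₄ t₈ t₇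
  rw [ha₁] at h₁
  rw [hb₁] at h₂
  rw [ha₂] at h₅
  rw [hb₂] at h₆
  refine ⟨A, B, hA, hB, ?_⟩
  rw [inv_eq_adjugate_of_det_eq_one hA, inv_eq_adjugate_of_det_eq_one hB]
  exact ⟨h₁, h₂, h₃, h₄, h₅, h₆, h₇, h₈⟩
end

section
/- Let j be a complex number with j² + j + 1 = 0. For a, b, c, d ∈ ℂ define the 3×3 matrices A = [[j, 0, 0], [j², 1, 0], [b + a, 2ja, j²]] and B = [[j, 2j²d, c + d], [0, 1, j], [0, 0, j²]]. Then det A = det B = 1 and the following trace identities hold: tr(AB) = (a+b)(d+c) + 2aj² + 2jd; tr(A⁻¹B) = (a−b)(d+c) − 2a − 2d + 3; tr(A⁻¹B⁻¹) = (a−b)(d−c) + 2ja + 2j²d; tr(AB⁻¹) = (a+b)(d−c) − 2a − 2d + 3. -/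
/-!
Since `j ^ 3 = 1`, both triangular matrices have determinant `1`, and their inverses are triangular
matrices of the same shape with entries polynomial in `j`, `a`, `b`, `c`, `d` (`inv_lower` and
`inv_upper`). With these explicit inverses, every trace is a polynomial in `j` which reduces to the
claimed value modulo `j ^ 2 + j + 1`.
-/

open Matrix

theorem inv_lower (j : ℂ) (h3 : j ^ 3 = 1) (a b : ℂ) :
    (!![j, 0, 0; j ^ 2, 1, 0; b + a, 2 * j * a, j ^ 2])⁻¹ =
      !![j ^ 2, 0, 0; -j, 1, 0; a - b, -2 * j ^ 2 * a, j] := by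
  apply Matrix.inv_eq_right_inv
  ext i k
  fin_cases i <;> fin_cases k <;> simp [Matrix.mul_apply, Fin.sum_univ_three] <;> grind

theorem inv_upper (j : ℂ) (h3 : j ^ 3 = 1) (c d : ℂ) :
    (!![j, 2 * j ^ 2 * d, c + d; 0, 1, j; 0, 0, j ^ 2])⁻¹ =
      !![j ^ 2, -2 * j * d, d - c; 0, 1, -j ^ 2; 0, 0, j] := by
  apply Matrix.inv_eq_right_inv
  ext i k
  fin_cases i <;> fin_cases k <;> simp [Matrix.mul_apply, Fin.sum_univ_three] <;> grind

theorem trace_identities_normal_form (j : ℂ) (hj : j ^ 2 + j + 1 = 0) (a b c d : ℂ)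
    (A B : Matrix (Fin 3) (Fin 3) ℂ)
    (hA : A = !![j, 0, 0; j ^ 2, 1, 0; b + a, 2 * j * a, j ^ 2])
    (hB : B = !![j, 2 * j ^ 2 * d, c + d; 0, 1, j; 0, 0, j ^ 2]) :
    A.det = 1 ∧ B.det = 1 ∧
    (A * B).trace = (a + b) * (d + c) + 2 * a * j ^ 2 + 2 * j * d ∧
    (A⁻¹ * B).trace = (a - b) * (d + c) - 2 * a - 2 * d + 3 ∧
    (A⁻¹ * B⁻¹).trace = (a - b) * (d - c) + 2 * j * a + 2 * j ^ 2 * d ∧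
    (A * B⁻¹).trace = (a + b) * (d - c) - 2 * a - 2 * d + 3 := by
  have h3 : j ^ 3 = 1 := by linear_combination (j - 1) * hj
  subst hA hB
  rw [inv_lower j h3, inv_upper j h3]
  refine ⟨?_, ?_, ?_, ?_, ?_, ?_⟩ <;>
    simp [Matrix.det_fin_three, Matrix.trace_fin_three, Matrix.mul_apply, Fin.sum_univ_three] <;>
    grind
end

section
/- Let j ∈ ℂ satisfy j² + j + 1 = 0 and let z₁, z₂, z₃, z₄ ∈ ℂ. Set Δ = z₁²z₃² − 2z₁z₂z₃z₄ + z₂²z₄² − 4z₁³ − 4z₂³ − 4z₃³ − 4z₄³ + 18z₁z₃ + 18z₂z₄ − 27 and let δ ∈ ℂ satisfy δ² = Δ. Assume the four quantities jz₁ + z₂ + j²z₃ + z₄ + 3, j²z₁ + z₂ + jz₃ + z₄ + 3, z₁ + z₂ + j²z₃ + j²z₄ + 3j, z₁ + jz₂ + jz₃ + z₄ + 3j² are nonzero, and define a = (z₁z₃ − z₂z₄ + 6jz₁ + 6j²z₃ + 9 + δ)/(4(jz₁ + z₂ + j²z₃ + z₄ + 3)), d = (z₁z₃ − z₂z₄ +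 6j²z₁ + 6jz₃ + 9 − δ)/(4(j²z₁ + z₂ + jz₃ + z₄ + 3)), b = ((z₁ − z₂ − j²z₃ + j²z₄ + 3(j² − 1))·a + (j − 1)(z₁ + jz₂ + jz₃ + z₄ + 3j²))/(z₁ + z₂ + j²z₃ + j²z₄ + 3j), c = ((z₁ + jz₂ − jz₃ − z₄ + 3(j − 1))·d + (j² − 1)(z₁ + z₂ + j²z₃ + j²z₄ + 3j))/(z₁ + jz₂ + jz₃ + z₄ + 3j²). Then the matrices A = [[j, 0, 0], [j², 1, 0], [b + a, 2ja, j²]] and B = [[j, 2j²d, c + d], [0, 1, j], [0, 0, j²]] satisfy tr(AB) = z₁, tr(A⁻¹B) = z₂, tr(A⁻¹B⁻¹) = z₃, tr(AB⁻¹) = z₄. -/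
open Matrix

/-!
Since `j` is a primitive cube root of unity, `A` and `B` have order three, so their inverses are
explicit and the four traces are polynomials in `a, b, c, d` (`traces_eq`). Once the terms linear in
`a` and `d` are set aside, the four traces are combinations of the four products `a * d`, `a * c`,
`b * d`, `b * c` by an invertible sign matrix. The theorem is therefore equivalent to a formula for
each product, affine in `a` and `d`.

The formula for `a * d` comes from multiplying the definitions of `a` and `d`, and is the only place
where `δ ^ 2 = Δ` enters. The definitions of `c` and `b`, multiplied by `a` or `d`, then give `a * c`
and `b * d`; multiplying the definition of `c` by `b` gives `b * c`.
-/

/-- The four traces as polynomials in the entries; they are obtained from the inverses `A⁻¹ = A ^ 2`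
and `B⁻¹ = B ^ 2`. -/
lemma traces_eq (j a b c d : ℂ) (hj : j ^ 2 + j + 1 = 0) :
    let A : Matrix (Fin 3) (Fin 3) ℂ := !![j, 0, 0; j ^ 2, 1, 0; b + a, 2 * j * a, j ^ 2]
    let B : Matrix (Fin 3) (Fin 3) ℂ := !![j, 2 * j ^ 2 * d, c + d; 0, 1, j; 0, 0, j ^ 2]
    (A * B).trace = 2 * j ^ 2 * a + 2 * j * d + (a + b) * (c + d) ∧
    (A⁻¹ * B).trace = 3 - 2 * a - 2 * d + (a - b) * (c + d) ∧
    (A⁻¹ * B⁻¹).trace = 2 * j * a + 2 * j ^ 2 * d + (a - b) * (d - c) ∧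
    (A * B⁻¹).trace = 3 - 2 * a - 2 * d + (a + b) * (d - c) := by
  intro A B
  have hA : A⁻¹ = !![j ^ 2, 0, 0; -j, 1, 0; a - b, -2 * j ^ 2 * a, j] := by
    apply Matrix.inv_eq_right_inv
    ext x y
    fin_cases x <;> fin_cases y <;> simp [A, Matrix.mul_apply, Fin.sum_univ_three] <;> grind
  have hB : B⁻¹ = !![j ^ 2, -2 * j * d, d - c; 0, 1, -j ^ 2; 0, 0, j] := by
    apply Matrix.inv_eq_right_inv
    ext x y
    fin_cases x <;> fin_cases y <;> simp [B, Matrix.mul_apply, Fin.sum_univ_three] <;> grind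
  rw [hA, hB]
  simp only [A, B, Matrix.trace_fin_three, Matrix.mul_apply, Fin.sum_univ_three]
  refine ⟨?_, ?_, ?_, ?_⟩ <;> simp <;> grind


theorem parametrisation_traces (j : ℂ) (hj : j ^ 2 + j + 1 = 0) (z₁ z₂ z₃ z₄ : ℂ)
    (Δ δ : ℂ)
    (hΔ : Δ = z₁ ^ 2 * z₃ ^ 2 - 2 * z₁ * z₂ * z₃ * z₄ + z₂ ^ 2 * z₄ ^ 2
      - 4 * z₁ ^ 3 - 4 * z₂ ^ 3 - 4 * z₃ ^ 3 - 4 * z₄ ^ 3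
      + 18 * z₁ * z₃ + 18 * z₂ * z₄ - 27)
    (hδ : δ ^ 2 = Δ)
    (h₁ : j * z₁ + z₂ + j ^ 2 * z₃ + z₄ + 3 ≠ 0)
    (h₂ : j ^ 2 * z₁ + z₂ + j * z₃ + z₄ + 3 ≠ 0)
    (h₃ : z₁ + z₂ + j ^ 2 * z₃ + j ^ 2 * z₄ + 3 * j ≠ 0)
    (h₄ : z₁ + j * z₂ + j * z₃ + z₄ + 3 * j ^ 2 ≠ 0)
    (a b c d : ℂ)
    (ha : a = (z₁ * z₃ - z₂ * z₄ + 6 * j * z₁ + 6 * j ^ 2 * z₃ + 9 + δ) /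
      (4 * (j * z₁ + z₂ + j ^ 2 * z₃ + z₄ + 3)))
    (hd : d = (z₁ * z₃ - z₂ * z₄ + 6 * j ^ 2 * z₁ + 6 * j * z₃ + 9 - δ) /
      (4 * (j ^ 2 * z₁ + z₂ + j * z₃ + z₄ + 3)))
    (hb : b = ((z₁ - z₂ - j ^ 2 * z₃ + j ^ 2 * z₄ + 3 * (j ^ 2 - 1)) * a
      + (j - 1) * (z₁ + j * z₂ + j * z₃ + z₄ + 3 * j ^ 2)) /
      (z₁ + z₂ + j ^ 2 * z₃ + j ^ 2 * z₄ + 3 * j))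
    (hc : c = ((z₁ + j * z₂ - j * z₃ - z₄ + 3 * (j - 1)) * d
      + (j ^ 2 - 1) * (z₁ + z₂ + j ^ 2 * z₃ + j ^ 2 * z₄ + 3 * j)) /
      (z₁ + j * z₂ + j * z₃ + z₄ + 3 * j ^ 2))
    (A B : Matrix (Fin 3) (Fin 3) ℂ)
    (hA : A = !![j, 0, 0; j ^ 2, 1, 0; b + a, 2 * j * a, j ^ 2])
    (hB : B = !![j, 2 * j ^ 2 * d, c + d; 0, 1, j; 0, 0, j ^ 2]) :
    (A * B).trace = z₁ ∧ (A⁻¹ * B).trace = z₂ ∧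
    (A⁻¹ * B⁻¹).trace = z₃ ∧ (A * B⁻¹).trace = z₄ := by
  have ha' : a * (4 * (j * z₁ + z₂ + j ^ 2 * z₃ + z₄ + 3)) =
      z₁ * z₃ - z₂ * z₄ + 6 * j * z₁ + 6 * j ^ 2 * z₃ + 9 + δ := by
    rw [ha]; exact div_mul_cancel₀ _ (mul_ne_zero (by norm_num) h₁)
  have hd' : d * (4 * (j ^ 2 * z₁ + z₂ + j * z₃ + z₄ + 3)) =
      z₁ * z₃ - z₂ * z₄ + 6 * j ^ 2 * z₁ + 6 * j * z₃ + 9 - δ := by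
    rw [hd]; exact div_mul_cancel₀ _ (mul_ne_zero (by norm_num) h₂)
  have hb' := (eq_div_iff h₃).mp hb
  have hc' := (eq_div_iff h₄).mp hc
  have had : 4 * (a * d) = z₁ + z₂ + z₃ + z₄ - 6 + 6 * (a + d) := by
    apply mul_left_cancel₀ (mul_ne_zero h₁ h₂)
    linear_combination (norm := skip)
      (1 / 4 : ℂ) * (d * (4 * (j ^ 2 * z₁ + z₂ + j * z₃ + z₄ + 3))) * ha'
      + (1 / 4 : ℂ) * (z₁ * z₃ - z₂ * z₄ + 6 * j * z₁ + 6 * j ^ 2 * z₃ + 9 + δ) * hd'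
      - (6 / 4 : ℂ) * (j ^ 2 * z₁ + z₂ + j * z₃ + z₄ + 3) * ha'
      - (6 / 4 : ℂ) * (j * z₁ + z₂ + j ^ 2 * z₃ + z₄ + 3) * hd'
      - (1 / 4 : ℂ) * hδ - (1 / 4 : ℂ) * hΔ
    clear * - hj
    grind
  -- The sum of the two defining equations is free of `δ`: the products below see `a` and `d` only
  -- through it and through the formula for `a * d`.
  have hsum := congrArg₂ (· + ·) ha' hd'
  have hac : 4 * (a * c) = z₁ + z₂ - z₃ - z₄ - 2 * (j ^ 2 - j) * (a - d) := by
    apply mul_left_cancel₀ h₄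
    linear_combination (norm := skip) 4 * a * hc'
      + (z₁ + j * z₂ - j * z₃ - z₄ + 3 * (j - 1)) * had + (j - 1) * hsum
    clear * - hj
    grind
  have hbd : 4 * (b * d) = z₁ - z₂ - z₃ + z₄ - 2 * (j ^ 2 - j) * (a - d) := by
    apply mul_left_cancel₀ h₃
    linear_combination (norm := skip) 4 * d * hb'
      + (z₁ - z₂ - j ^ 2 * z₃ + j ^ 2 * z₄ + 3 * (j ^ 2 - 1)) * had + (j ^ 2 - 1) * hsum
    clear * - hj
    grind
  have hbc : 4 * (b * c) = z₁ - z₂ + z₃ - z₄ + 6 - 2 * (a + d) := by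
    apply mul_left_cancel₀ h₄
    linear_combination (norm := skip) 4 * b * hc'
      + (z₁ + j * z₂ - j * z₃ - z₄ + 3 * (j - 1)) * hbd + 4 * (j ^ 2 - 1) * hb' - j ^ 2 * hsum
    clear * - hj
    grind
  obtain ⟨t₁, t₂, t₃, t₄⟩ := traces_eq j a b c d hj
  rw [hA, hB, t₁, t₂, t₃, t₄]
  clear * - hj had hac hbd hbc
  refine ⟨?_, ?_, ?_, ?_⟩ <;> grind
end

section
/- Let j ∈ ℂ satisfy j² + j + 1 = 0 and let z₁, z₂, z₃, z₄ ∈ ℂ. Set Δ = z₁²z₃² − 2z₁z₂z₃z₄ + z₂²z₄² − 4z₁³ − 4z₂³ − 4z₃³ − 4z₄³ + 18z₁z₃ + 18z₂z₄ − 27. Assume the four quantities jz₁ + z₂ + j²z₃ + z₄ + 3, j²z₁ + z₂ + jz₃ + z₄ + 3, z₁ + z₂ + j²z₃ + j²z₄ + 3j, z₁ + jz₂ + jz₃ + z₄ + 3j² are nonzero. Let A₀, B₀ be 3×3 complex matrices with det A₀ = det B₀ = 1, A₀³ = B₀³ = I, A₀ and B₀ not scalar multiples of the identity, satisfying tr(A₀B₀)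 = z₁, tr(A₀⁻¹B₀) = z₂, tr(A₀⁻¹B₀⁻¹) = z₃, tr(A₀B₀⁻¹) = z₄, and such that the j²-eigenspace of A₀ is different from the j-eigenspace of B₀. Then there exist δ ∈ ℂ with δ² = Δ and a matrix P with det P = 1 such that P·A₀·P⁻¹ = A and P·B₀·P⁻¹ = B, where A = [[j, 0, 0], [j², 1, 0], [b + a, 2ja, j²]] and B = [[j, 2j²d, c + d], [0, 1, j], [0, 0, j²]] with a = (z₁z₃ − z₂z₄ + 6jz₁ + 6j²z₃ + 9 + δ)/(4(jz₁ + z₂ + j²z₃ + z₄ + 3)), d = (z₁z₃ − z₂z₄ + 6j²z₁ + 6jz₃ + 9 − δ)/(4(j²z₁ + z₂ + jz₃ + z₄ + 3)), b = ((z₁ − z₂ − j²z₃ + j²z₄ + 3(j² − 1))·a + (j − 1)(z₁ + jz₂ + jz₃ + z₄ + 3j²))/(z₁ + z₂ + j²z₃ + j²z₄ + 3j), c = ((z₁ + jz₂ − jz₃ − z₄ + 3(j − 1))·d + (j² − 1)(z₁ + z₂ + j²z₃ + j²z₄ + 3j))/(z₁ + jz₂ + jz₃ + z₄ + 3j²).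 -/
open Matrix

/-!
The idea is to read off the normal form from the flags preserved by the two matrices.

Both `A₀` and `B₀` are diagonalisable with eigenvalues `1, j, j²` (`exists_diag`): by
Cayley–Hamilton, an order-three matrix of determinant one that is not scalar has
characteristic polynomial `X³ - 1`. Writing `π_λ` for the spectral projection on the
`λ`-eigenspace, the four quantities assumed nonzero are, up to nonzero factors,
`tr (π_j(A₀) π_j(B₀))`, `tr (π_{j²}(A₀) π_{j²}(B₀))`, `tr (π_1(A₀) π_j(B₀))` and
`tr (π_{j²}(A₀) π_1(B₀))` (`trace_spectral_projections`).

Consider the basis `e₁, e₂, e₃` where `e₁` spans the `j`-eigenspace of `B₀`, `e₃` spans the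
`j²`-eigenspace of `A₀`, and `e₂` spans the intersection of the plane spanned by the
`1`- and `j²`-eigenvectors of `A₀` with the plane spanned by the `j`- and `1`-eigenvectors
of `B₀`. The first two conditions make it a basis; in it `A₀` is lower triangular and `B₀`
upper triangular. The last two conditions say that the entries `(2,1)` of `A₀` and `(2,3)` of
`B₀` are nonzero, so rescaling `e₁` and `e₃` turns them into `j²` and `j`
(`exists_adapted_basis`, `exists_normal_form`).

The remaining four entries are encoded by `a, b, c, d`. The traces are then explicit quadratic
polynomials in them (`normal_form_traces`); defining `δ` so that the formula for `a` holds, the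
formulas for `b, c, d` and the equation `δ² = Δ` are polynomial identities modulo `j² + j + 1`
(`parameter_relations`).
-/

/-! ### Diagonalisation -/

/-- The characteristic polynomial of `A` is `X³ - t X² + s X - 1`, so `A³ = 1` gives `s A = t A²`.
As `A` is invertible and not scalar, `t = s = 0`. -/
lemma trace_eq_zero {A : Matrix (Fin 3) (Fin 3) ℂ} (hdet : A.det = 1)
    (h3 : A ^ 3 = 1) (hns : ¬∃ c : ℂ, A = c • (1 : Matrix (Fin 3) (Fin 3) ℂ)) :
    A.trace = 0 ∧ (A ^ 2).trace = 0 := by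
  set t := A.trace with ht
  obtain ⟨s, hs⟩ : ∃ s : ℂ, s = (t ^ 2 - (A ^ 2).trace) / 2 := ⟨_, rfl⟩
  have hCH : A ^ 3 - t • A ^ 2 + s • A - A.det • (1 : Matrix (Fin 3) (Fin 3) ℂ) = 0 := by
    rw [hs, ht, det_fin_three, pow_succ A 2, pow_two A]
    ext x y
    fin_cases x <;> fin_cases y <;>
      simp [trace_fin_three, Matrix.mul_apply, Fin.sum_univ_three] <;> ring
  rw [hdet, h3, one_smul, sub_add_eq_add_sub, sub_eq_zero, sub_eq_iff_eq_add, add_right_inj] at hCH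
  -- multiply `s • A = t • A ^ 2` by `A ^ 2 = A⁻¹`
  have h1 : s • (1 : Matrix (Fin 3) (Fin 3) ℂ) = t • A := by
    have := congrArg (· * A ^ 2) hCH
    simp only [smul_mul_assoc] at this
    rwa [← pow_succ', h3, ← pow_add, show 2 + 2 = 3 + 1 from rfl, pow_succ, h3, one_mul] at this
  have ht0 : t = 0 := by
    by_contra h
    exact hns ⟨t⁻¹ * s, by rw [mul_smul, h1, smul_smul, inv_mul_cancel₀ h, one_smul]⟩
  have hs0 : s = 0 := by
    have := congrFun (congrFun h1 0) 0
    simpa [ht0] using this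
  refine ⟨ht0, ?_⟩
  rw [hs0, ht0] at hs
  linear_combination 2 * hs

/-- `Q = A² + l A + l²` satisfies `A Q = l Q` and has trace `3 l² ≠ 0`, so that any nonzero vector
in its range is an eigenvector. -/
lemma exists_eigenvector {A : Matrix (Fin 3) (Fin 3) ℂ} (h3 : A ^ 3 = 1)
    (ht : A.trace = 0) (ht2 : (A ^ 2).trace = 0) {l : ℂ} (hl : l ^ 3 = 1) :
    ∃ u : Fin 3 → ℂ, u ≠ 0 ∧ A *ᵥ u = l • u := by
  set Q : Matrix (Fin 3) (Fin 3) ℂ := A ^ 2 + l • A + l ^ 2 • (1 : Matrix (Fin 3) (Fin 3) ℂ) with hQ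
  have hAQ : A * Q = l • Q := by
    rw [hQ, mul_add, mul_add, ← pow_succ', h3, mul_smul_comm, mul_smul_comm, ← pow_two, mul_one,
      smul_add, smul_add, smul_smul, smul_smul, ← pow_succ', hl, one_smul, ← pow_two]
    abel
  have hQtr : Q.trace = 3 * l ^ 2 := by
    simp [hQ, trace_add, trace_smul, ht, ht2, mul_comm]
  have hl0 : l ≠ 0 := by rintro rfl; norm_num at hl
  have hQ0 : Q ≠ 0 := by
    intro h
    rw [h, trace_zero] at hQtr
    exact mul_ne_zero three_ne_zero (pow_ne_zero 2 hl0) hQtr.symm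
  obtain ⟨w, hw⟩ : ∃ w, Q *ᵥ w ≠ 0 := by
    by_contra! h
    exact hQ0 (Matrix.ext_of_mulVec_single fun i => by rw [h, zero_mulVec])
  exact ⟨Q *ᵥ w, hw, by rw [mulVec_mulVec, hAQ, smul_mulVec]⟩

lemma exists_diag {j : ℂ} (hj : j ^ 2 + j + 1 = 0) {A D : Matrix (Fin 3) (Fin 3) ℂ}
    (hD : D = diagonal ![1, j, j ^ 2]) (hdet : A.det = 1)
    (h3 : A ^ 3 = 1) (hns : ¬∃ c : ℂ, A = c • (1 : Matrix (Fin 3) (Fin 3) ℂ)) :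
    ∃ U U' : Matrix (Fin 3) (Fin 3) ℂ, U * U' = 1 ∧ U' * U = 1 ∧
      A = U * D * U' := by
  obtain ⟨ht, ht2⟩ := trace_eq_zero hdet h3 hns
  have hj3 : j ^ 3 = 1 := by linear_combination (j - 1) * hj
  have hroot : ∀ i, (![1, j, j ^ 2] i) ^ 3 = 1 := by
    intro i
    fin_cases i
    · simp
    · simpa using hj3
    · simp [← pow_mul, mul_comm 2 3, pow_mul j 3 2, hj3]
  have hinj : Function.Injective ![1, j, j ^ 2] := by
    have h01 : j ≠ 1 := by rintro rfl; norm_num at hj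
    have h0 : j ≠ 0 := by rintro rfl; norm_num at hj
    intro x y
    fin_cases x <;> fin_cases y <;> simp <;> grind
  choose u hu0 hu using fun i => exists_eigenvector h3 ht ht2 (hroot i)
  have hli : LinearIndependent ℂ u :=
    Module.End.eigenvectors_linearIndependent' A.mulVecLin _ hinj u fun i =>
      ⟨Module.End.mem_eigenspace_iff.2 (hu i), hu0 i⟩
  have hU : IsUnit (of u)ᵀ := Matrix.linearIndependent_cols_iff_isUnit.1 hli
  have hdU := (isUnit_iff_isUnit_det _).1 hU
  refine ⟨(of u)ᵀ, (of u)ᵀ⁻¹, mul_nonsing_inv _ hdU, nonsing_inv_mul _ hdU, ?_⟩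
  have : A * (of u)ᵀ = (of u)ᵀ * D := by
    rw [hD]
    ext x y
    rw [mul_diagonal]
    simpa [mulVec, dotProduct, Matrix.mul_apply, mul_comm] using congrFun (hu y) x
  rw [← this, mul_assoc, mul_nonsing_inv _ hdU, mul_one]

/-! ### The adapted basis -/

/-- If `A = U D U⁻¹`, `B = V D V⁻¹`, `M = U⁻¹ V` and `N = V⁻¹ U`, then `M i k * N k i` is the trace of
the product of the spectral projections of `A` and `B` for the `i`-th and the `k`-th entry of `D`;
the spectral projections are polynomials in `A` and `B`. -/
lemma trace_spectral_projections {j : ℂ} (hj : j ^ 2 + j + 1 = 0) {M N : Matrix (Fin 3) (Fin 3) ℂ}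
    (hMN : M * N = 1) (hNM : N * M = 1) {z₁ z₂ z₃ z₄ : ℂ} {D : Matrix (Fin 3) (Fin 3) ℂ}
    (hD : D = diagonal ![1, j, j ^ 2])
    (h1 : (D * M * (D * N)).trace = z₁) (h2 : (D ^ 2 * M * (D * N)).trace = z₂)
    (h3 : (D ^ 2 * M * (D ^ 2 * N)).trace = z₃) (h4 : (D * M * (D ^ 2 * N)).trace = z₄) :
    j * z₁ + z₂ + j ^ 2 * z₃ + z₄ + 3 = 9 * (M 1 1 * N 1 1) ∧
    j ^ 2 * z₁ + z₂ + j * z₃ + z₄ + 3 = 9 * (M 2 2 * N 2 2) ∧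
    z₁ + z₂ + j ^ 2 * z₃ + j ^ 2 * z₄ + 3 * j = 9 * j * (M 0 1 * N 1 0) ∧
    z₁ + j * z₂ + j * z₃ + z₄ + 3 * j ^ 2 = 9 * j ^ 2 * (M 2 0 * N 0 2) := by
  have hj2 : j ^ 2 = -1 - j := by linear_combination hj
  have hD2 : D ^ 2 = diagonal ![1, -1 - j, j] := by
    rw [hD, diagonal_pow]
    congr 1
    ext i
    fin_cases i <;> simp <;> grind
  rw [hj2] at hD
  have r i := congrFun (congrFun hMN i) i
  have s i := congrFun (congrFun hNM i) i
  have r0 := r 0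
  have r1 := r 1
  have r2 := r 2
  have s0 := s 0
  have s1 := s 1
  have s2 := s 2
  simp only [Matrix.mul_apply, Fin.sum_univ_three, one_apply_eq] at r0 r1 r2 s0 s1 s2
  rw [hD2] at h2 h3 h4
  rw [hD] at h1 h2 h4
  simp only [trace_fin_three, Matrix.mul_apply (M := _ * _), diagonal_mul, Fin.sum_univ_three] at h1 h2 h3 h4
  simp at h1 h2 h3 h4
  clear hD hD2 r s hMN hNM
  refine ⟨?_, ?_, ?_, ?_⟩ <;> grind

/-- In a basis of eigenvectors of `A` the pair `(A, B)` is `(D, M D N)`. The columns of `Q` are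
multiples of the `j`-eigenvector of `B` (the column of index 1 of `M`), the intersection `(N 2 2, 0, -N 2 0)` of the planes
`x 1 = 0` and `(N x) 2 = 0`, and the `j²`-eigenvector of `A`. -/
lemma exists_adapted_basis {j : ℂ} (hj : j ^ 2 + j + 1 = 0) {M N : Matrix (Fin 3) (Fin 3) ℂ}
    (hMN : M * N = 1) (hNM : N * M = 1) {D : Matrix (Fin 3) (Fin 3) ℂ}
    (hD : D = diagonal ![1, j, j ^ 2]) (h11 : M 1 1 ≠ 0) (h22 : N 2 2 ≠ 0) (h01 : M 0 1 ≠ 0)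
    (h02 : N 0 2 ≠ 0) :
    ∃ (Q : Matrix (Fin 3) (Fin 3) ℂ) (y z p q : ℂ), Q.det ≠ 0 ∧
      D * Q = Q * !![j, 0, 0; j ^ 2, 1, 0; y, z, j ^ 2] ∧
      M * D * N * Q = Q * !![j, p, q; 0, 1, j; 0, 0, j ^ 2] := by
  have hj0 : j ≠ 0 := by rintro rfl; norm_num at hj
  have hj1 : 1 - j ≠ 0 := by
    intro h
    obtain rfl : j = 1 := by linear_combination -h
    norm_num at hj
  have hj2 : 1 - j ^ 2 ≠ 0 := by
    intro h
    have : j = -2 := by linear_combination hj + h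
    rw [this] at hj
    norm_num at hj
  have e i k := congrFun (congrFun hNM i) k
  have e01 := e 0 1
  have e11 := e 1 1
  have e21 := e 2 1
  simp [Matrix.mul_apply, Fin.sum_univ_three] at e01 e11 e21
  obtain ⟨α, hα⟩ : ∃ α, α = N 0 0 * N 2 2 - N 0 2 * N 2 0 := ⟨_, rfl⟩
  obtain ⟨β, hβ⟩ : ∃ β, β = N 1 0 * N 2 2 - N 1 2 * N 2 0 := ⟨_, rfl⟩
  have hNdet : N.det ≠ 0 := by
    intro h
    simpa [h] using congrArg det hNM
  -- `α` is the cofactor of `N 1 1`, hence by Cramer `α = N.det * M 1 1`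
  have hα0 : α ≠ 0 := by
    have : N.det * M 1 1 = α := by
      rw [det_fin_three, hα]
      linear_combination -(N 1 0 * N 2 2 - N 1 2 * N 2 0) * e01 + (N 0 0 * N 2 2 - N 0 2 * N 2 0) * e11
        - (N 0 0 * N 1 2 - N 0 2 * N 1 0) * e21
    rw [← this]
    exact mul_ne_zero hNdet h11
  -- the scaling factors of the first and third basis vectors that normalise the entries
  -- `(2,1)` of `A` and `(2,3)` of `B`
  obtain ⟨r, hr⟩ : ∃ r, r = j ^ 2 * N 2 2 / ((1 - j) * M 0 1) := ⟨_, rfl⟩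
  obtain ⟨s, hs⟩ : ∃ s, s = j * α / ((1 - j ^ 2) * N 0 2) := ⟨_, rfl⟩
  have hr0 : r ≠ 0 := by rw [hr]; positivity
  have hs0 : s ≠ 0 := by rw [hs]; positivity
  have hr' : r * ((1 - j) * M 0 1) = j ^ 2 * N 2 2 := by rw [hr]; field_simp
  have hs' : s * ((1 - j ^ 2) * N 0 2) = j * α := by rw [hs]; field_simp
  obtain ⟨y, hy⟩ : ∃ y, y * s = (j ^ 2 - j) * r * M 2 1 + j ^ 2 * N 2 0 :=
    ⟨_, div_mul_cancel₀ _ hs0⟩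
  obtain ⟨z, hz⟩ : ∃ z, z * s = (1 - j ^ 2) * N 2 0 := ⟨_, div_mul_cancel₀ _ hs0⟩
  obtain ⟨p, hp⟩ : ∃ p, p * r = (j - 1) * β := ⟨_, div_mul_cancel₀ _ hr0⟩
  obtain ⟨q, hq⟩ : ∃ q, q * r = s * (j - j ^ 2) * N 1 2 - j * β := ⟨_, div_mul_cancel₀ _ hr0⟩
  clear hr hs
  obtain ⟨Q, hQ⟩ : ∃ Q, Q = !![r * M 0 1, N 2 2, 0; r * M 1 1, 0, 0; r * M 2 1, -N 2 0, s] :=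
    ⟨_, rfl⟩
  have hNQ : N * Q = !![0, α, s * N 0 2; r, β, s * N 1 2; 0, 0, s * N 2 2] := by
    clear hr' hs' hy hz hp hq
    ext x y
    fin_cases x <;> fin_cases y <;> simp [hQ, Matrix.mul_apply, Fin.sum_univ_three]
    · linear_combination r * e01
    · rw [hα]; ring
    · ring
    · linear_combination r * e11
    · rw [hβ]; ring
    · ring
    · linear_combination r * e21
    · ring
    · ring
  refine ⟨Q, y, z, p, q, ?_, ?_, ?_⟩
  · have : Q.det = -(r * s * (M 1 1 * N 2 2)) := by rw [hQ, det_fin_three]; simp; ring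
    rw [this]
    exact neg_ne_zero.2 (mul_ne_zero (mul_ne_zero hr0 hs0) (mul_ne_zero h11 h22))
  · rw [hD, hQ]
    ext x y
    rw [diagonal_mul]
    fin_cases x <;> fin_cases y <;> simp [Matrix.mul_apply, Fin.sum_univ_three]
    · linear_combination hr'
    · ring
    · linear_combination -hy
    · linear_combination -hz
    · ring
  · have key : D * (N * Q) = N * Q * !![j, p, q; 0, 1, j; 0, 0, j ^ 2] := by
      rw [hNQ, hD]
      ext x y
      rw [diagonal_mul]
      fin_cases x <;> fin_cases y <;> simp [Matrix.mul_apply, Fin.sum_univ_three]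
      · linear_combination hs'
      · ring
      · linear_combination -hp
      · linear_combination -hq
      · ring
    have := congrArg (M * ·) key
    simp only [← mul_assoc, hMN, one_mul] at this
    exact this

/-- A simultaneous conjugation can be made by a matrix of determinant one, since the determinant of `W`
has a cube root. -/
lemma exists_conj {A B W L R : Matrix (Fin 3) (Fin 3) ℂ} (hW : W.det ≠ 0)
    (hA : A * W = W * L) (hB : B * W = W * R) :
    ∃ P : Matrix (Fin 3) (Fin 3) ℂ, P.det = 1 ∧ P * A * P⁻¹ = L ∧ P * B * P⁻¹ = R := by
  have hWu : IsUnit W.det := isUnit_iff_ne_zero.2 hW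
  obtain ⟨k, hk⟩ := IsAlgClosed.exists_pow_nat_eq W.det (n := 3) (by norm_num)
  have hk0 : k ≠ 0 := by
    rintro rfl
    exact hW (by simpa using hk.symm)
  have hP : (k • W⁻¹)⁻¹ = k⁻¹ • W := by
    refine inv_eq_left_inv ?_
    rw [smul_mul_smul_comm, inv_mul_cancel₀ hk0, mul_nonsing_inv _ hWu, one_smul]
  have key {X Y : Matrix (Fin 3) (Fin 3) ℂ} (h : X * W = W * Y) :
      k • W⁻¹ * X * (k • W⁻¹)⁻¹ = Y := by
    rw [hP, smul_mul_assoc, smul_mul_smul_comm, mul_inv_cancel₀ hk0, one_smul, mul_assoc, h,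
      nonsing_inv_mul_cancel_left _ _ hWu]
  refine ⟨k • W⁻¹, ?_, key hA, key hB⟩
  rw [det_smul, Fintype.card_fin, hk, ← det_mul, mul_nonsing_inv _ hWu, det_one]

/-- The pair is conjugate to a lower and an upper triangular matrix with normalised entries `(2,1)`
and `(2,3)`; inverses are written as squares. -/
lemma exists_normal_form {j : ℂ} (hj : j ^ 2 + j + 1 = 0) {z₁ z₂ z₃ z₄ : ℂ}
    (h₁ : j * z₁ + z₂ + j ^ 2 * z₃ + z₄ + 3 ≠ 0)
    (h₂ : j ^ 2 * z₁ + z₂ + j * z₃ + z₄ + 3 ≠ 0)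
    (h₃ : z₁ + z₂ + j ^ 2 * z₃ + j ^ 2 * z₄ + 3 * j ≠ 0)
    (h₄ : z₁ + j * z₂ + j * z₃ + z₄ + 3 * j ^ 2 ≠ 0)
    {A₀ B₀ : Matrix (Fin 3) (Fin 3) ℂ}
    (hdetA₀ : A₀.det = 1) (hdetB₀ : B₀.det = 1)
    (hA₀3 : A₀ ^ 3 = 1) (hB₀3 : B₀ ^ 3 = 1)
    (hA₀ns : ¬∃ c : ℂ, A₀ = c • (1 : Matrix (Fin 3) (Fin 3) ℂ))
    (hB₀ns : ¬∃ c : ℂ, B₀ = c • (1 : Matrix (Fin 3) (Fin 3) ℂ))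
    (ht₁ : (A₀ * B₀).trace = z₁) (ht₂ : (A₀ ^ 2 * B₀).trace = z₂)
    (ht₃ : (A₀ ^ 2 * B₀ ^ 2).trace = z₃) (ht₄ : (A₀ * B₀ ^ 2).trace = z₄) :
    ∃ (y z p q : ℂ) (P : Matrix (Fin 3) (Fin 3) ℂ), P.det = 1 ∧
      P * A₀ * P⁻¹ = !![j, 0, 0; j ^ 2, 1, 0; y, z, j ^ 2] ∧
      P * B₀ * P⁻¹ = !![j, p, q; 0, 1, j; 0, 0, j ^ 2] := by
  obtain ⟨D, hD⟩ : ∃ D : Matrix (Fin 3) (Fin 3) ℂ, D = diagonal ![1, j, j ^ 2] := ⟨_, rfl⟩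
  obtain ⟨U, U', hUU', hU'U, rfl⟩ := exists_diag hj hD hdetA₀ hA₀3 hA₀ns
  obtain ⟨V, V', hVV', hV'V, rfl⟩ := exists_diag hj hD hdetB₀ hB₀3 hB₀ns
  have hMN : U' * V * (V' * U) = 1 := by
    rw [mul_assoc, ← mul_assoc V, hVV', one_mul, hU'U]
  have hNM : V' * U * (U' * V) = 1 := by
    rw [mul_assoc, ← mul_assoc U, hUU', one_mul, hV'V]
  have sq_conj {W W' : Matrix (Fin 3) (Fin 3) ℂ} (h : W' * W = 1) :
      (W * D * W') ^ 2 = W * D ^ 2 * W' := by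
    rw [pow_two, pow_two]
    simp only [mul_assoc]
    rw [← mul_assoc W' W, h, one_mul]
  have tr_conj (E F : Matrix (Fin 3) (Fin 3) ℂ) :
      (U * E * U' * (V * F * V')).trace = (E * (U' * V) * (F * (V' * U))).trace := by
    rw [show U * E * U' * (V * F * V') = U * (E * U' * (V * F * V')) by simp only [mul_assoc],
      trace_mul_comm]
    simp only [mul_assoc]
  obtain ⟨e₁, e₂, e₃, e₄⟩ := trace_spectral_projections hj hMN hNM hD
    (by rw [← tr_conj, ht₁]) (by rw [← tr_conj, ← sq_conj hU'U, ht₂])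
    (by rw [← tr_conj, ← sq_conj hU'U, ← sq_conj hV'V, ht₃])
    (by rw [← tr_conj, ← sq_conj hV'V, ht₄])
  rw [e₁] at h₁
  rw [e₂] at h₂
  rw [e₃] at h₃
  rw [e₄] at h₄
  simp only [ne_eq, mul_eq_zero, not_or] at h₁ h₂ h₃ h₄
  obtain ⟨Q, y, z, p, q, hQ, hQA, hQB⟩ := exists_adapted_basis hj hMN hNM hD h₁.2.1 h₂.2.2 h₃.2.1 h₄.2.2
  have hU0 : U.det ≠ 0 := by
    intro h
    simpa [h] using congrArg det hUU'
  refine ⟨y, z, p, q, ?_⟩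
  refine exists_conj (W := U * Q) (by rw [det_mul]; exact mul_ne_zero hU0 hQ) ?_ ?_
  · rw [mul_assoc U Q, ← hQA, mul_assoc (U * D), ← mul_assoc U', hU'U, one_mul, mul_assoc]
  · rw [mul_assoc U Q, ← hQB]
    simp only [← mul_assoc]
    rw [hUU', one_mul]

/-! ### Traces of the normal form -/

/-- The four traces of the normal form; inverses are written as squares. -/
lemma normal_form_traces {j : ℂ} (hj : j ^ 2 + j + 1 = 0) (a b c d : ℂ) {L R : Matrix (Fin 3) (Fin 3) ℂ}
    (hL : L = !![j, 0, 0; j ^ 2, 1, 0; b + a, 2 * j * a, j ^ 2])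
    (hR : R = !![j, 2 * j ^ 2 * d, c + d; 0, 1, j; 0, 0, j ^ 2]) :
    (L * R).trace = (a + b) * (c + d) - 2 * (j + 1) * a + 2 * j * d ∧
    (L ^ 2 * R).trace = (a - b) * (c + d) - 2 * a - 2 * d + 3 ∧
    (L ^ 2 * R ^ 2).trace = (a - b) * (d - c) + 2 * j * a - 2 * (j + 1) * d ∧
    (L * R ^ 2).trace = (a + b) * (d - c) - 2 * a - 2 * d + 3 := by
  have hj2 : j ^ 2 = -1 - j := by linear_combination hj
  rw [hj2] at hL hR
  have hL2 : L ^ 2 = !![-1 - j, 0, 0; -j, 1, 0; a - b, 2 * (j + 1) * a, j] := by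
    rw [hL, pow_two]
    ext x y
    fin_cases x <;> fin_cases y <;> simp [Matrix.mul_apply, Fin.sum_univ_three] <;> grind
  have hR2 : R ^ 2 = !![-1 - j, -2 * j * d, d - c; 0, 1, j + 1; 0, 0, j] := by
    rw [hR, pow_two]
    ext x y
    fin_cases x <;> fin_cases y <;> simp [Matrix.mul_apply, Fin.sum_univ_three] <;> grind
  rw [hL2, hR2, hL, hR]
  simp only [Matrix.trace_fin_three, Matrix.mul_apply, Fin.sum_univ_three]
  refine ⟨?_, ?_, ?_, ?_⟩ <;> simp <;> grind

/-- With `δ` defined by the formula for `a`, the other formulas, with denominators cleared, and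
`δ² = Δ` hold modulo `j² + j + 1`. -/
lemma parameter_relations {j : ℂ} (hj : j ^ 2 + j + 1 = 0) (a b c d z₁ z₂ z₃ z₄ δ : ℂ)
    (h1 : z₁ = (a + b) * (c + d) - 2 * (j + 1) * a + 2 * j * d)
    (h2 : z₂ = (a - b) * (c + d) - 2 * a - 2 * d + 3)
    (h3 : z₃ = (a - b) * (d - c) + 2 * j * a - 2 * (j + 1) * d)
    (h4 : z₄ = (a + b) * (d - c) - 2 * a - 2 * d + 3)
    (hδ : δ = a * (4 * (j * z₁ + z₂ + j ^ 2 * z₃ + z₄ + 3)) - (z₁ * z₃ - z₂ * z₄ + 6 * j * z₁ + 6 * j ^ 2 * z₃ + 9)) :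
    δ ^ 2 = z₁ ^ 2 * z₃ ^ 2 - 2 * z₁ * z₂ * z₃ * z₄ + z₂ ^ 2 * z₄ ^ 2
      - 4 * z₁ ^ 3 - 4 * z₂ ^ 3 - 4 * z₃ ^ 3 - 4 * z₄ ^ 3
      + 18 * z₁ * z₃ + 18 * z₂ * z₄ - 27 ∧
    d * (4 * (j ^ 2 * z₁ + z₂ + j * z₃ + z₄ + 3)) = (z₁ * z₃ - z₂ * z₄ + 6 * j ^ 2 * z₁ + 6 * j * z₃ + 9 - δ) ∧
    b * (z₁ + z₂ + j ^ 2 * z₃ + j ^ 2 * z₄ + 3 * j) = ((z₁ - z₂ - j ^ 2 * z₃ + j ^ 2 * z₄ + 3 * (j ^ 2 - 1)) * a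
        + (j - 1) * (z₁ + j * z₂ + j * z₃ + z₄ + 3 * j ^ 2)) ∧
    c * (z₁ + j * z₂ + j * z₃ + z₄ + 3 * j ^ 2) = ((z₁ + j * z₂ - j * z₃ - z₄ + 3 * (j - 1)) * d
        + (j ^ 2 - 1) * (z₁ + z₂ + j ^ 2 * z₃ + j ^ 2 * z₄ + 3 * j)) := by
  have hj2 : j ^ 2 = -1 - j := by linear_combination hj
  subst h1 h2 h3 h4
  rw [hj2] at *
  subst hδ
  refine ⟨?_, ?_, ?_, ?_⟩ <;> grind

theorem parametrisation_of_X₀ (j : ℂ) (hj : j ^ 2 + j + 1 = 0) (z₁ z₂ z₃ z₄ : ℂ)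
    (Δ : ℂ)
    (hΔ : Δ = z₁ ^ 2 * z₃ ^ 2 - 2 * z₁ * z₂ * z₃ * z₄ + z₂ ^ 2 * z₄ ^ 2
      - 4 * z₁ ^ 3 - 4 * z₂ ^ 3 - 4 * z₃ ^ 3 - 4 * z₄ ^ 3
      + 18 * z₁ * z₃ + 18 * z₂ * z₄ - 27)
    (h₁ : j * z₁ + z₂ + j ^ 2 * z₃ + z₄ + 3 ≠ 0)
    (h₂ : j ^ 2 * z₁ + z₂ + j * z₃ + z₄ + 3 ≠ 0)
    (h₃ : z₁ + z₂ + j ^ 2 * z₃ + j ^ 2 * z₄ + 3 * j ≠ 0)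
    (h₄ : z₁ + j * z₂ + j * z₃ + z₄ + 3 * j ^ 2 ≠ 0)
    (A₀ B₀ : Matrix (Fin 3) (Fin 3) ℂ)
    (hdetA₀ : A₀.det = 1) (hdetB₀ : B₀.det = 1)
    (hA₀3 : A₀ ^ 3 = 1) (hB₀3 : B₀ ^ 3 = 1)
    (hA₀ns : ¬∃ c : ℂ, A₀ = c • (1 : Matrix (Fin 3) (Fin 3) ℂ))
    (hB₀ns : ¬∃ c : ℂ, B₀ = c • (1 : Matrix (Fin 3) (Fin 3) ℂ))
    (ht₁ : (A₀ * B₀).trace = z₁) (ht₂ : (A₀⁻¹ * B₀).trace = z₂)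
    (ht₃ : (A₀⁻¹ * B₀⁻¹).trace = z₃) (ht₄ : (A₀ * B₀⁻¹).trace = z₄)
    (heig : Module.End.eigenspace A₀.mulVecLin (j ^ 2) ≠
      Module.End.eigenspace B₀.mulVecLin j) :
    ∃ (δ : ℂ) (P : Matrix (Fin 3) (Fin 3) ℂ), δ ^ 2 = Δ ∧ P.det = 1 ∧
      (let a := (z₁ * z₃ - z₂ * z₄ + 6 * j * z₁ + 6 * j ^ 2 * z₃ + 9 + δ) /
        (4 * (j * z₁ + z₂ + j ^ 2 * z₃ + z₄ + 3));
       let d := (z₁ * z₃ - z₂ * z₄ + 6 * j ^ 2 * z₁ + 6 * j * z₃ + 9 - δ) /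
        (4 * (j ^ 2 * z₁ + z₂ + j * z₃ + z₄ + 3));
       let b := ((z₁ - z₂ - j ^ 2 * z₃ + j ^ 2 * z₄ + 3 * (j ^ 2 - 1)) * a
        + (j - 1) * (z₁ + j * z₂ + j * z₃ + z₄ + 3 * j ^ 2)) /
        (z₁ + z₂ + j ^ 2 * z₃ + j ^ 2 * z₄ + 3 * j);
       let c := ((z₁ + j * z₂ - j * z₃ - z₄ + 3 * (j - 1)) * d
        + (j ^ 2 - 1) * (z₁ + z₂ + j ^ 2 * z₃ + j ^ 2 * z₄ + 3 * j)) /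
        (z₁ + j * z₂ + j * z₃ + z₄ + 3 * j ^ 2);
       P * A₀ * P⁻¹ = !![j, 0, 0; j ^ 2, 1, 0; b + a, 2 * j * a, j ^ 2] ∧
       P * B₀ * P⁻¹ = !![j, 2 * j ^ 2 * d, c + d; 0, 1, j; 0, 0, j ^ 2]) := by
  have inv_eq {A : Matrix (Fin 3) (Fin 3) ℂ} (h : A ^ 3 = 1) : A⁻¹ = A ^ 2 :=
    inv_eq_left_inv (by rw [← pow_succ, h])
  rw [inv_eq hA₀3] at ht₂ ht₃
  rw [inv_eq hB₀3] at ht₃ ht₄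
  obtain ⟨y, z, p, q, P, hP, hA, hB⟩ := exists_normal_form hj h₁ h₂ h₃ h₄ hdetA₀ hdetB₀ hA₀3 hB₀3
    hA₀ns hB₀ns ht₁ ht₂ ht₃ ht₄
  have hj0 : j ≠ 0 := by rintro rfl; norm_num at hj
  obtain ⟨a, rfl⟩ : ∃ a, z = 2 * j * a := ⟨z / (2 * j), by field_simp⟩
  obtain ⟨b, rfl⟩ : ∃ b, y = b + a := ⟨y - a, by ring⟩
  obtain ⟨d, rfl⟩ : ∃ d, p = 2 * j ^ 2 * d := ⟨p / (2 * j ^ 2), by field_simp⟩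
  obtain ⟨c, rfl⟩ : ∃ c, q = c + d := ⟨q - d, by ring⟩
  have hPu : IsUnit P.det := by rw [hP]; exact isUnit_one
  have conj_mul (X Y : Matrix (Fin 3) (Fin 3) ℂ) :
      P * X * P⁻¹ * (P * Y * P⁻¹) = P * (X * Y) * P⁻¹ := by
    simp only [mul_assoc]
    rw [nonsing_inv_mul_cancel_left _ _ hPu]
  have conj_tr (X : Matrix (Fin 3) (Fin 3) ℂ) : (P * X * P⁻¹).trace = X.trace := by
    rw [trace_mul_comm, nonsing_inv_mul_cancel_left _ _ hPu]
  obtain ⟨t₁, t₂, t₃, t₄⟩ := normal_form_traces hj a b c d hA hB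
  rw [conj_mul, conj_tr, ht₁] at t₁
  rw [pow_two, conj_mul, conj_mul, conj_tr, ← pow_two, ht₂] at t₂
  rw [pow_two, pow_two, conj_mul, conj_mul, conj_mul, conj_tr, ← pow_two, ← pow_two, ht₃] at t₃
  rw [pow_two, conj_mul, conj_mul, conj_tr, ← pow_two, ht₄] at t₄
  obtain ⟨δ, hδ⟩ : ∃ δ, δ = a * (4 * (j * z₁ + z₂ + j ^ 2 * z₃ + z₄ + 3)) -
      (z₁ * z₃ - z₂ * z₄ + 6 * j * z₁ + 6 * j ^ 2 * z₃ + 9) := ⟨_, rfl⟩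
  obtain ⟨k₁, k₂, k₃, k₄⟩ := parameter_relations hj a b c d z₁ z₂ z₃ z₄ δ t₁ t₂ t₃ t₄ hδ
  have h40 : (4 : ℂ) ≠ 0 := by norm_num
  have ea := eq_div_of_mul_eq (mul_ne_zero h40 h₁) (a := a)
    (b := z₁ * z₃ - z₂ * z₄ + 6 * j * z₁ + 6 * j ^ 2 * z₃ + 9 + δ) (by rw [hδ]; ring)
  have ed := eq_div_of_mul_eq (mul_ne_zero h40 h₂) k₂
  have eb := eq_div_of_mul_eq h₃ k₃
  have ec := eq_div_of_mul_eq h₄ k₄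
  refine ⟨δ, P, by rw [k₁, hΔ], hP, ?_⟩
  intro a' d' b' c'
  have ha' : a' = a := ea.symm
  have hd' : d' = d := ed.symm
  have hb' : b' = b := by rw [eb, ← ha']
  have hc' : c' = c := by rw [ec, ← hd']
  rw [ha', hb', hc', hd']
  exact ⟨hA, hB⟩
end
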